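/- arXiv:1404.3118 — 3 statements merged into one kernel-verified Lean document; each statement's English description precedes it below -/
import Mathlib

section
/- Let m ≥ 2 be an integer, let p be a real number with 1 < p < m, and let λ be a Borel probability measure on ℝ^m. Then for every compactly supported Lipschitz function φ : ℝ^m → ℝ one has ((m−p)/p)^p · ∫_{ℝ^m} ( ∫_{ℝ^m} ‖x−y‖^(−p) dλ(y) ) · |φ(x)|^p dx ≤ ∫_{ℝ^m} ‖Dφ(x)‖^p dx, where the inner integral is taken in [0,∞], the outer integrals are with respect to Lebesgue measure, and Dφ denotes the almost-everywhere defined (Rademacher) derivative of φ. -/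
open MeasureTheory
open scoped ENNReal NNReal

lemma hardy_ray {E : Type*} [NormedAddCommGroup E] [NormedSpace ℝ E]
    (φ : E → ℝ) (K : NNReal) (hLip : LipschitzWith K φ) (hsupp : HasCompactSupport φ)
    (x : E) (hx : x ≠ 0)
    (hd : ∀ᵐ t ∂(volume.restrict (Set.Ioi (1:ℝ))), DifferentiableAt ℝ φ (t • x)) :
    ‖φ x‖ₑ ≤ ‖x‖ₑ * ∫⁻ t in Set.Ioi (1:ℝ), ‖fderiv ℝ φ (t • x)‖ₑ := by
  have hx0 : 0 < ‖x‖ := norm_pos_iff.2 hx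
  obtain ⟨R, hR⟩ := hsupp.isCompact.isBounded.subset_closedBall (0 : E)
  set T : ℝ := max 1 ((|R| + 1) / ‖x‖) with hT
  have h1T : 1 ≤ T := le_max_left _ _
  have hφT : φ (T • x) = 0 := by
    apply image_eq_zero_of_notMem_tsupport
    intro h
    have h2 := hR h
    rw [mem_closedBall_zero_iff, norm_smul, Real.norm_eq_abs, abs_of_pos (by linarith)] at h2
    have h3 : |R| + 1 ≤ T * ‖x‖ := by
      rw [← div_le_iff₀ hx0]; exact le_max_right _ _
    have := le_abs_self R
    linarith
  have hLf : LipschitzWith (K * ‖x‖₊) (fun t : ℝ => φ (t • x)) := by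
    refine hLip.comp (LipschitzWith.of_dist_le_mul fun a b => ?_)
    rw [dist_eq_norm, dist_eq_norm, ← sub_smul, norm_smul, mul_comm]; rfl
  have hac : AbsolutelyContinuousOnInterval (fun t : ℝ => φ (t • x)) 1 T :=
    (hLf.lipschitzOnWith).absolutelyContinuousOnInterval
  have hFTC := hac.integral_deriv_eq_sub
  simp only [hφT, one_smul, zero_sub] at hFTC
  rw [intervalIntegral.integral_of_le h1T] at hFTC
  have : ‖φ x‖ₑ = ‖∫ t in Set.Ioc 1 T, deriv (fun t : ℝ => φ (t • x)) t‖ₑ := by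
    rw [hFTC, enorm_neg]
  rw [this, ← lintegral_const_mul' _ _ enorm_ne_top]
  refine (enorm_integral_le_lintegral_enorm _).trans ?_
  refine (lintegral_mono_set Set.Ioc_subset_Ioi_self).trans ?_
  refine lintegral_mono_ae ?_
  filter_upwards [hd] with t ht
  have h1 : HasDerivAt (fun t : ℝ => t • x) x t := by
    simpa using (hasDerivAt_id t).smul_const x
  have h2 := ht.hasFDerivAt.comp_hasDerivAt t h1
  have h3 : deriv (fun t : ℝ => φ (t • x)) t = fderiv ℝ φ (t • x) x := h2.deriv
  rw [h3, mul_comm]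
  exact ContinuousLinearMap.le_opENorm _ _

lemma hardy_Ioi (s : ℝ) (hs : 1 < s) :
    ∫⁻ t in Set.Ioi (1:ℝ), ENNReal.ofReal (t ^ (-s)) = ENNReal.ofReal (1 / (s - 1)) := by
  rw [← ofReal_integral_eq_lintegral_ofReal (integrableOn_Ioi_rpow_of_lt (by linarith) one_pos)]
  · rw [integral_Ioi_rpow_of_lt (by linarith) one_pos]
    congr 1
    rw [Real.one_rpow, neg_div, ← div_neg]; ring_nf
  · refine (ae_restrict_mem measurableSet_Ioi).mono fun t ht => ?_
    exact Real.rpow_nonneg (by linarith [Set.mem_Ioi.1 ht]) _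

lemma hardy_holder (p s : ℝ) (hp : 1 < p) (hs : 1 < s) (g : ℝ → ℝ≥0∞) (hg : Measurable g) :
    (∫⁻ t in Set.Ioi (1:ℝ), g t) ^ p ≤
      ENNReal.ofReal (1 / (s - 1)) ^ (p - 1) *
        ∫⁻ t in Set.Ioi (1:ℝ), g t ^ p * ENNReal.ofReal (t ^ (s * (p - 1))) := by
  have hpq := Real.HolderConjugate.conjExponent hp
  set q := p.conjExponent with hq
  have hp0 : 0 < p := by linarith
  have hq0 : 0 < q := hpq.symm.pos
  have hqi : 1 / q = (p - 1) / p := by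
    rw [hq, Real.conjExponent]; field_simp
  have H := ENNReal.lintegral_mul_le_Lp_mul_Lq (volume.restrict (Set.Ioi (1:ℝ))) hpq
    (f := fun t => g t * ENNReal.ofReal (t ^ (s / q)))
    (g := fun t => ENNReal.ofReal (t ^ (-(s / q)))) (by fun_prop) (by fun_prop)
  have e1 : ∫⁻ t in Set.Ioi (1:ℝ), ((fun t => g t * ENNReal.ofReal (t ^ (s / q))) *
      fun t => ENNReal.ofReal (t ^ (-(s / q)))) t = ∫⁻ t in Set.Ioi (1:ℝ), g t := by
    refine setLIntegral_congr_fun measurableSet_Ioi fun t ht => ?_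
    have ht0 : (0:ℝ) < t := lt_trans one_pos ht
    simp only [Pi.mul_apply]
    rw [mul_assoc, ← ENNReal.ofReal_mul (by positivity), ← Real.rpow_add ht0]
    simp
  have e2 : ∫⁻ t in Set.Ioi (1:ℝ), (g t * ENNReal.ofReal (t ^ (s / q))) ^ p =
      ∫⁻ t in Set.Ioi (1:ℝ), g t ^ p * ENNReal.ofReal (t ^ (s * (p - 1))) := by
    refine setLIntegral_congr_fun measurableSet_Ioi fun t ht => ?_
    have ht0 : (0:ℝ) < t := lt_trans one_pos ht
    rw [ENNReal.mul_rpow_of_nonneg _ _ hp0.le, ENNReal.ofReal_rpow_of_nonneg (by positivity) hp0.le,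
      ← Real.rpow_mul ht0.le]
    congr 3
    rw [div_eq_mul_one_div, hqi]; field_simp
  have e3 : ∫⁻ t in Set.Ioi (1:ℝ), (ENNReal.ofReal (t ^ (-(s / q)))) ^ q =
      ENNReal.ofReal (1 / (s - 1)) := by
    rw [← hardy_Ioi s hs]
    refine setLIntegral_congr_fun measurableSet_Ioi fun t ht => ?_
    have ht0 : (0:ℝ) < t := lt_trans one_pos ht
    rw [ENNReal.ofReal_rpow_of_nonneg (by positivity) hq0.le, ← Real.rpow_mul ht0.le]
    congr 2
    field_simp
  rw [e1] at H
  simp only [e2, e3] at H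
  refine (ENNReal.rpow_le_rpow H hp0.le).trans (le_of_eq ?_)
  rw [ENNReal.mul_rpow_of_nonneg _ _ hp0.le, ← ENNReal.rpow_mul, ← ENNReal.rpow_mul, hqi,
    one_div_mul_cancel hp0.ne', div_mul_cancel₀ _ hp0.ne', ENNReal.rpow_one, mul_comm]

lemma hardy_scale (m : ℕ) (F : EuclideanSpace ℝ (Fin m) → ℝ≥0∞) (hF : Measurable F)
    (t : ℝ) (ht : 0 < t) :
    ∫⁻ x, F (t • x) = ENNReal.ofReal (t ^ (-(m:ℝ))) * ∫⁻ x, F x := by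
  have h := Measure.map_addHaar_smul (volume : Measure (EuclideanSpace ℝ (Fin m))) ht.ne'
  have h2 : ∫⁻ x, F (t • x) = ∫⁻ x, F x ∂(Measure.map (t • ·) volume) := by
    rw [lintegral_map hF (by fun_prop)]
  rw [h2, h, lintegral_smul_measure, smul_eq_mul]
  congr 2
  rw [finrank_euclideanSpace_fin, abs_of_pos (by positivity), Real.rpow_neg ht.le,
    Real.rpow_natCast]

lemma hardy_single (m : ℕ) (hm : 2 ≤ m) (p : ℝ) (hp1 : 1 < p) (hpm : p < m)
    (φ : EuclideanSpace ℝ (Fin m) → ℝ) (K : NNReal)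
    (hLip : LipschitzWith K φ) (hsupp : HasCompactSupport φ) :
    ∫⁻ x, ‖x‖ₑ ^ (-p) * ‖φ x‖ₑ ^ p ≤
      ENNReal.ofReal (p / (m - p)) ^ p * ∫⁻ x, ‖fderiv ℝ φ x‖ₑ ^ p := by
  have hp0 : 0 < p := by linarith
  have : Nonempty (Fin m) := ⟨⟨0, by omega⟩⟩
  have hs : 1 < (m:ℝ) / p := by rwa [one_lt_div hp0]
  have hC : 1 / ((m:ℝ) / p - 1) = p / (m - p) := by
    have : (m:ℝ) - p ≠ 0 := by linarith
    field_simp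
  set C := ENNReal.ofReal (p / (m - p)) with hCdef
  have hDm : Measurable (fderiv ℝ φ) := measurable_fderiv ℝ φ
  -- differentiability along almost every ray
  have hd : ∀ᵐ x : EuclideanSpace ℝ (Fin m), ∀ᵐ t ∂(volume.restrict (Set.Ioi (1:ℝ))),
      DifferentiableAt ℝ φ (t • x) := by
    rw [Measure.ae_ae_comm]
    · filter_upwards [ae_restrict_mem measurableSet_Ioi] with t ht
      have ht0 : (0:ℝ) < t := lt_trans one_pos ht
      have hq : Measure.QuasiMeasurePreserving (fun x : EuclideanSpace ℝ (Fin m) => t • x)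
          volume volume := by
        refine ⟨by fun_prop, ?_⟩
        rw [Measure.map_addHaar_smul _ ht0.ne']
        exact Measure.smul_absolutelyContinuous
      exact hq.ae hLip.ae_differentiableAt
    · have hm : Measurable (fun z : EuclideanSpace ℝ (Fin m) × ℝ => z.2 • z.1) := by fun_prop
      exact hm (measurableSet_of_differentiableAt ℝ φ)
  have hne : ∀ᵐ x : EuclideanSpace ℝ (Fin m), x ≠ 0 := by
    simp [ae_iff]
  calc ∫⁻ x, ‖x‖ₑ ^ (-p) * ‖φ x‖ₑ ^ p
      ≤ ∫⁻ x : EuclideanSpace ℝ (Fin m), C ^ (p - 1) * ∫⁻ t in Set.Ioi (1:ℝ),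
          ‖fderiv ℝ φ (t • x)‖ₑ ^ p * ENNReal.ofReal (t ^ ((m:ℝ) / p * (p - 1))) := by
        refine lintegral_mono_ae ?_
        filter_upwards [hd, hne] with x hx hx0
        have h1 := hardy_ray φ K hLip hsupp x hx0 hx
        have h2 := hardy_holder p ((m:ℝ)/p) hp1 hs (fun t => ‖fderiv ℝ φ (t • x)‖ₑ)
          (hDm.comp (by fun_prop)).enorm
        rw [hC] at h2
        refine le_trans ?_ h2
        have h3 := ENNReal.rpow_le_rpow h1 hp0.le
        rw [ENNReal.mul_rpow_of_nonneg _ _ hp0.le] at h3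
        refine (mul_le_mul_right h3 _).trans ?_
        rw [← mul_assoc, ENNReal.rpow_neg, ENNReal.inv_mul_cancel, one_mul]
        · simp [hx0, hp0.le, hp0]
        · exact ENNReal.rpow_ne_top_of_nonneg hp0.le enorm_ne_top
    _ = C ^ (p - 1) * ∫⁻ t in Set.Ioi (1:ℝ), ∫⁻ x : EuclideanSpace ℝ (Fin m),
          ‖fderiv ℝ φ (t • x)‖ₑ ^ p * ENNReal.ofReal (t ^ ((m:ℝ) / p * (p - 1))) := by
        have hmeas : Measurable (fun z : EuclideanSpace ℝ (Fin m) × ℝ =>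
            ‖fderiv ℝ φ (z.2 • z.1)‖ₑ ^ p * ENNReal.ofReal (z.2 ^ ((m:ℝ) / p * (p - 1)))) := by
          have : Measurable (fun z : EuclideanSpace ℝ (Fin m) × ℝ => fderiv ℝ φ (z.2 • z.1)) :=
            hDm.comp (by fun_prop)
          have h2 := this.enorm
          fun_prop
        rw [lintegral_const_mul' _ _ (ENNReal.rpow_ne_top_of_nonneg (by linarith)
          ENNReal.ofReal_ne_top), lintegral_lintegral_swap hmeas.aemeasurable]
    _ = C ^ (p - 1) * ∫⁻ t in Set.Ioi (1:ℝ), ENNReal.ofReal (t ^ (-((m:ℝ) / p))) *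
          ∫⁻ x, ‖fderiv ℝ φ x‖ₑ ^ p := by
        congr 1
        refine setLIntegral_congr_fun measurableSet_Ioi fun t ht => ?_
        have ht0 : (0:ℝ) < t := lt_trans one_pos ht
        rw [lintegral_mul_const' _ _ ENNReal.ofReal_ne_top,
          hardy_scale m (fun x => ‖fderiv ℝ φ x‖ₑ ^ p) (hDm.enorm.pow_const p) t ht0,
          mul_right_comm, ← ENNReal.ofReal_mul (by positivity), ← Real.rpow_add ht0]
        congr 3
        field_simp; ring
    _ = C ^ p * ∫⁻ x, ‖fderiv ℝ φ x‖ₑ ^ p := by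
        rw [lintegral_mul_const _ (by fun_prop), hardy_Ioi _ hs, hC, ← mul_assoc]
        congr 1
        have hCpos : C ≠ 0 := by
          rw [hCdef]; simp only [ne_eq, ENNReal.ofReal_eq_zero, not_le]
          exact div_pos hp0 (by linarith)
        conv_lhs => rw [← hCdef]
        conv_lhs => enter [2]; rw [← ENNReal.rpow_one C]
        rw [← ENNReal.rpow_add _ _ hCpos ENNReal.ofReal_ne_top]
        congr 1; ring

theorem hardy_multipole (m : ℕ) (hm : 2 ≤ m) (p : ℝ) (hp1 : 1 < p) (hpm : p < m)
    (lam : Measure (EuclideanSpace ℝ (Fin m))) [IsProbabilityMeasure lam]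
    (φ : EuclideanSpace ℝ (Fin m) → ℝ) (K : NNReal)
    (hLip : LipschitzWith K φ) (hsupp : HasCompactSupport φ) :
    ENNReal.ofReal ((((m : ℝ) - p) / p) ^ p) *
        ∫⁻ x : EuclideanSpace ℝ (Fin m),
          (∫⁻ y, (‖x - y‖₊ : ℝ≥0∞) ^ (-p) ∂lam) * ENNReal.ofReal (|φ x| ^ p) ≤
      ENNReal.ofReal (∫ x : EuclideanSpace ℝ (Fin m), ‖fderiv ℝ φ x‖ ^ p) := by
  have hp0 : 0 < p := by linarith
  have hDm : Measurable (fderiv ℝ φ) := measurable_fderiv ℝ φ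
  have hint : Integrable (fun x => ‖fderiv ℝ φ x‖ ^ p) := by
    have hcs : HasCompactSupport (fun x => ‖fderiv ℝ φ x‖ ^ p) :=
      (hsupp.fderiv (𝕜 := ℝ)).comp_left (g := fun L => ‖L‖ ^ p) (by simp [hp0.ne'])
    rw [← integrableOn_iff_integrable_of_support_subset (subset_tsupport _)]
    refine Measure.integrableOn_of_bounded (M := (K:ℝ) ^ p) hcs.isCompact.measure_lt_top.ne
      (hDm.norm.pow_const p).aestronglyMeasurable ?_
    refine Filter.Eventually.of_forall fun x => ?_
    rw [Real.norm_of_nonneg (by positivity)]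
    exact Real.rpow_le_rpow (norm_nonneg _) (norm_fderiv_le_of_lipschitz ℝ hLip) hp0.le
  rw [ofReal_integral_eq_lintegral_ofReal hint
    (Filter.Eventually.of_forall fun x => by positivity)]
  have hR : ∫⁻ x, ENNReal.ofReal (‖fderiv ℝ φ x‖ ^ p) = ∫⁻ x, ‖fderiv ℝ φ x‖ₑ ^ p := by
    refine lintegral_congr fun x => ?_
    rw [← ENNReal.ofReal_rpow_of_nonneg (norm_nonneg _) hp0.le, ofReal_norm]
  rw [hR]
  set D := ∫⁻ x, ‖fderiv ℝ φ x‖ₑ ^ p with hD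
  set C := ENNReal.ofReal (p / (m - p)) with hCdef
  have hφm : Measurable φ := hLip.continuous.measurable
  have hL : ∫⁻ x : EuclideanSpace ℝ (Fin m),
      (∫⁻ y, (‖x - y‖₊ : ℝ≥0∞) ^ (-p) ∂lam) * ENNReal.ofReal (|φ x| ^ p) =
      ∫⁻ y, (∫⁻ x : EuclideanSpace ℝ (Fin m), ‖x - y‖ₑ ^ (-p) * ‖φ x‖ₑ ^ p) ∂lam := by
    rw [lintegral_lintegral_swap]
    · refine lintegral_congr fun x => ?_
      rw [← lintegral_mul_const' _ _ ENNReal.ofReal_ne_top]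
      refine lintegral_congr fun y => ?_
      rw [← ENNReal.ofReal_rpow_of_nonneg (abs_nonneg _) hp0.le, ← Real.norm_eq_abs, ofReal_norm]
      rfl
    · apply Measurable.aemeasurable
      simp only [Function.uncurry_def]
      fun_prop
  have hpole : ∀ y : EuclideanSpace ℝ (Fin m),
      ∫⁻ x : EuclideanSpace ℝ (Fin m), ‖x - y‖ₑ ^ (-p) * ‖φ x‖ₑ ^ p ≤ C ^ p * D := by
    intro y
    have hL2 : LipschitzWith K (fun x => φ (x + y)) := by
      refine LipschitzWith.of_dist_le_mul fun a b => ?_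
      simpa using hLip.dist_le_mul (a + y) (b + y)
    have hc2 : HasCompactSupport (fun x => φ (x + y)) :=
      hsupp.comp_homeomorph (Homeomorph.addRight y)
    have H := hardy_single m hm p hp1 hpm _ K hL2 hc2
    simp only [fderiv_comp_add_right] at H
    rw [lintegral_add_right_eq_self (fun x => ‖fderiv ℝ φ x‖ₑ ^ p) y] at H
    rw [← lintegral_add_right_eq_self _ y]
    simpa using H
  rw [hL]
  calc _ ≤ ENNReal.ofReal ((((m : ℝ) - p) / p) ^ p) * ∫⁻ y, C ^ p * D ∂lam := by
        gcongr; exact hpole _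
    _ = D := by
        rw [lintegral_const, measure_univ, mul_one, ← mul_assoc, hCdef]
        have hmp : 0 < (m:ℝ) - p := by linarith
        rw [ENNReal.ofReal_rpow_of_nonneg (by positivity) hp0.le,
          ← ENNReal.ofReal_mul (by positivity), ← Real.mul_rpow (by positivity) (by positivity)]
        have : ((m:ℝ) - p) / p * (p / (m - p)) = 1 := by field_simp
        rw [this]; simp
    _ ≤ D := le_rfl
end

section
/- Let α > 0, κ > 0 and r > 0 be real numbers. Then sinh(κr)^α · ∫_r^∞ sinh(κs)^(−α) ds ≤ 1/(α·κ). -/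
open MeasureTheory Real Set

/-- The first part of property (4.17) of Example 4.1 of the paper:
`sinh(κr)^α ∫_r^∞ sinh(κs)^(−α) ds ≤ 1/(ακ)` for all `r > 0`; in terms of the Hardy
weight `χ_α`, this says `χ_α(r) ≥ ((p−1)/p)^p α^p κ^p`. -/
theorem sinh_integral_upper (α κ r : ℝ) (hα : 0 < α) (hκ : 0 < κ) (hr : 0 < r) :
    Real.sinh (κ * r) ^ α * ∫ s in Set.Ioi r, Real.sinh (κ * s) ^ (-α) ≤
      1 / (α * κ) := by
  have hS : 0 < Real.sinh (κ * r) := Real.sinh_pos_iff.2 (by positivity)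
  have hneg : -(α * κ) < 0 := by
    have := mul_pos hα hκ
    linarith
  -- pointwise bound `sinh (κ s) ≥ sinh (κ r) * exp (κ (s - r))`
  have key : ∀ s ∈ Set.Ioi r, Real.sinh (κ * r) * Real.exp (κ * (s - r)) ≤ Real.sinh (κ * s) := by
    intro s hs
    have hs' : r < s := hs
    have hle : Real.exp (-(κ * s)) ≤ Real.exp (-(κ * r) + κ * (s - r)) := by
      apply Real.exp_le_exp.2
      nlinarith [mul_pos hκ (sub_pos.2 hs')]
    have h1 : Real.exp (κ * r) * Real.exp (κ * (s - r)) = Real.exp (κ * s) := by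
      rw [← Real.exp_add]
      congr 1
      ring
    rw [Real.exp_add] at hle
    rw [Real.sinh_eq, Real.sinh_eq]
    nlinarith
  have bound : ∀ s ∈ Set.Ioi r, Real.sinh (κ * s) ^ (-α) ≤
      (Real.sinh (κ * r) ^ (-α) * Real.exp (α * κ * r)) * Real.exp (-(α * κ) * s) := by
    intro s hs
    have h2 := Real.rpow_le_rpow_of_nonpos (mul_pos hS (Real.exp_pos (κ * (s - r)))) (key s hs)
      (neg_nonpos.2 hα.le)
    rw [Real.mul_rpow hS.le (Real.exp_pos _).le, ← Real.exp_mul] at h2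
    refine h2.trans_eq ?_
    rw [mul_assoc (Real.sinh (κ * r) ^ (-α)), ← Real.exp_add]
    congr 2
    ring
  have hint : ∫ s in Set.Ioi r, Real.sinh (κ * s) ^ (-α) ≤
      ∫ s in Set.Ioi r,
        (Real.sinh (κ * r) ^ (-α) * Real.exp (α * κ * r)) * Real.exp (-(α * κ) * s) := by
    apply integral_mono_of_nonneg
    · refine (ae_restrict_iff' measurableSet_Ioi).2 (Filter.Eventually.of_forall fun s hs => ?_)
      have hs' : r < s := hs
      exact Real.rpow_nonneg (Real.sinh_nonneg_iff.2 (mul_pos hκ (hr.trans hs')).le) _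
    · exact (integrableOn_exp_mul_Ioi hneg r).const_mul _
    · exact (ae_restrict_iff' measurableSet_Ioi).2 (Filter.Eventually.of_forall bound)
  rw [integral_const_mul, integral_exp_mul_Ioi hneg] at hint
  refine (mul_le_mul_of_nonneg_left hint (Real.rpow_nonneg hS.le α)).trans_eq ?_
  have hA : Real.sinh (κ * r) ^ α * Real.sinh (κ * r) ^ (-α) = 1 := by
    rw [← Real.rpow_add hS, add_neg_cancel, Real.rpow_zero]
  have hB : Real.exp (α * κ * r) * Real.exp (-(α * κ) * r) = 1 := by
    rw [← Real.exp_add]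
    simp
  calc _ = (Real.sinh (κ * r) ^ α * Real.sinh (κ * r) ^ (-α)) *
        (Real.exp (α * κ * r) * Real.exp (-(α * κ) * r)) * (1 / (α * κ)) := by
        rw [neg_div_neg_eq]
        ring
    _ = _ := by rw [hA, hB]; ring
end

section
/- Let m ≥ 1 be an integer and let Ω ⊂ ℝ^m be a bounded, connected open set with smooth boundary. Let A, B : closure(Ω) → ℝ be continuous with B(x) ≥ 0 for all x and B not identically zero on Ω, and let F be a nonlinearity. Let u₁, u₂ : closure(Ω) → ℝ be continuously differentiable on closure(Ω), twice continuously differentiable on Ω, and satisfy: Δu₁ + A·u₁ − B·F(u₁) ≥ 0 on Ω; Δu₂ + A·u₂ − B·F(u₂) ≤ 0 on Ω; u₁ ≥ 0 on Ω; u₂ > 0 on Ω; and u₁ ≤ u₂ on ∂Ω, where Δ is the Euclidean Laplacian. Then u₁ ≤ u₂ on Ω. -/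
open MeasureTheory

/-- The Euclidean Laplacian: trace of the Hessian. -/
noncomputable def laplacian {m : ℕ} (u : EuclideanSpace ℝ (Fin m) → ℝ)
    (x : EuclideanSpace ℝ (Fin m)) : ℝ :=
  ∑ i, fderiv ℝ (fun y => fderiv ℝ u y (EuclideanSpace.single i (1 : ℝ))) x
    (EuclideanSpace.single i (1 : ℝ))

/-- An open set of `ℝ^m` with smooth boundary: it is the sublevel set of a smooth
function whose derivative does not vanish on the boundary. -/
def HasSmoothBoundary {m : ℕ} (Ω : Set (EuclideanSpace ℝ (Fin m))) : Prop :=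
  ∃ f : EuclideanSpace ℝ (Fin m) → ℝ, ContDiff ℝ (⊤ : ℕ∞) f ∧ Ω = {x | f x < 0} ∧
    ∀ x ∈ frontier Ω, fderiv ℝ f x ≠ 0

/-- A nonlinearity in the sense of (2.12) of the paper (with `p = 2`). -/
structure IsNonlinearity (F : ℝ → ℝ) : Prop where
  cont : ContinuousOn F (Set.Ici 0)
  zero : F 0 = 0
  pos : ∀ t : ℝ, 0 < t → 0 < F t
  strictMono : StrictMonoOn (fun t => F t / t) (Set.Ioi 0)
  tendsto_zero : Filter.Tendsto (fun t => F t / t) (nhdsWithin 0 (Set.Ioi 0)) (nhds 0)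
  tendsto_top : Filter.Tendsto (fun t => F t / t) Filter.atTop Filter.atTop


open Filter Topology Set

section Helpers

variable {m : ℕ}

local notation "E" => EuclideanSpace ℝ (Fin m)

lemma aux_contDiffAt_partial {u : E → ℝ} {x : E} (hu : ContDiffAt ℝ 2 u x) (e : E) :
    ContDiffAt ℝ 1 (fun y => fderiv ℝ u y e) x :=
  (hu.fderiv_right (m := 1) (by norm_num)).clm_apply contDiffAt_const

lemma aux_diff_near {u : E → ℝ} {x : E} (hu : ContDiffAt ℝ 2 u x) :
    ∀ᶠ y in 𝓝 x, DifferentiableAt ℝ u y := by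
  filter_upwards [hu.eventually (by simp)] with y hy
  exact hy.differentiableAt (by norm_num)

lemma laplacian_comb {u v : E → ℝ} {x : E} (hu : ContDiffAt ℝ 2 u x)
    (hv : ContDiffAt ℝ 2 v x) (a b : ℝ) :
    laplacian (fun y => a * u y + b * v y) x = a * laplacian u x + b * laplacian v x := by
  unfold laplacian
  rw [Finset.mul_sum, Finset.mul_sum, ← Finset.sum_add_distrib]
  refine Finset.sum_congr rfl fun i _ => ?_
  set e : E := EuclideanSpace.single i (1 : ℝ)
  have h1 : (fun y => fderiv ℝ (fun y => a * u y + b * v y) y e) =ᶠ[𝓝 x]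
      fun y => a * fderiv ℝ u y e + b * fderiv ℝ v y e := by
    filter_upwards [aux_diff_near hu, aux_diff_near hv] with y h1 h2
    rw [((h1.hasFDerivAt.const_mul a).fun_add (h2.hasFDerivAt.const_mul b)).fderiv]
    simp
  rw [h1.fderiv_eq]
  have d1 := (aux_contDiffAt_partial hu e).differentiableAt (by norm_num)
  have d2 := (aux_contDiffAt_partial hv e).differentiableAt (by norm_num)
  rw [((d1.hasFDerivAt.const_mul a).fun_add (d2.hasFDerivAt.const_mul b)).fderiv]
  simp

lemma laplacian_const (c : ℝ) (x : E) : laplacian (fun _ : E => c) x = 0 := by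
  simp [laplacian]

lemma laplacian_sq {f : E → ℝ} {x : E} (hf : ContDiffAt ℝ 2 f x) (h0 : f x = 0) :
    laplacian (fun y => f y * f y) x
      = 2 * ∑ i, (fderiv ℝ f x (EuclideanSpace.single i (1 : ℝ))) ^ 2 := by
  unfold laplacian
  rw [Finset.mul_sum]
  refine Finset.sum_congr rfl fun i _ => ?_
  set e : E := EuclideanSpace.single i (1 : ℝ)
  have h1 : (fun y => fderiv ℝ (fun y => f y * f y) y e) =ᶠ[𝓝 x]
      fun y => 2 * (f y * fderiv ℝ f y e) := by
    filter_upwards [aux_diff_near hf] with y h1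
    rw [(h1.hasFDerivAt.fun_mul h1.hasFDerivAt).fderiv]
    simp
    ring
  rw [h1.fderiv_eq]
  have d1 := (aux_contDiffAt_partial hf e).differentiableAt (by norm_num)
  have d0 := hf.differentiableAt (by norm_num)
  rw [((d0.hasFDerivAt.fun_mul d1.hasFDerivAt).const_mul 2).fderiv]
  simp [h0]
  ring

lemma laplacian_continuous {f : E → ℝ} (hf : ContDiff ℝ 2 f) : Continuous (laplacian f) := by
  unfold laplacian
  refine continuous_finsetSum _ fun i _ => ?_
  have h : ContDiff ℝ 1 (fun y => fderiv ℝ f y (EuclideanSpace.single i (1 : ℝ))) :=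
    contDiff_iff_contDiffAt.2 fun x => aux_contDiffAt_partial hf.contDiffAt _
  exact (h.continuous_fderiv (by norm_num)).clm_apply continuous_const

lemma grad_sq_pos {f : E → ℝ} {x : E} (h : fderiv ℝ f x ≠ 0) :
    0 < ∑ i, (fderiv ℝ f x (EuclideanSpace.single i (1 : ℝ))) ^ 2 := by
  by_contra hc
  have h0 : ∑ i, (fderiv ℝ f x (EuclideanSpace.single i (1 : ℝ))) ^ 2 = 0 :=
    le_antisymm (not_lt.1 hc) (Finset.sum_nonneg fun i _ => sq_nonneg _)
  rw [Finset.sum_eq_zero_iff_of_nonneg (fun i _ => sq_nonneg _)] at h0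
  apply h
  apply ContinuousLinearMap.coe_injective
  refine (EuclideanSpace.basisFun (Fin m) ℝ).toBasis.ext fun i => ?_
  have := h0 i (Finset.mem_univ i)
  simpa using this

lemma second_deriv_nonneg {g : ℝ → ℝ} (hmin : IsLocalMin g 0) (hc : ContinuousAt g 0) :
    0 ≤ deriv (deriv g) 0 := by
  by_contra hneg
  have hmax := isLocalMax_of_deriv_deriv_neg (not_le.1 hneg) hmin.deriv_eq_zero hc
  have hconst : g =ᶠ[𝓝 0] fun _ => g 0 := by
    filter_upwards [hmin, hmax] with y h1 h2
    exact le_antisymm h2 h1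
  have h2 : deriv g =ᶠ[𝓝 0] fun _ => 0 := by
    have := hconst.deriv
    simpa using this
  apply hneg
  rw [h2.deriv_eq]
  simp

lemma laplacian_nonneg_of_min {u : E → ℝ} {x : E} (hu : ContDiffAt ℝ 2 u x)
    (hmin : IsLocalMin u x) : 0 ≤ laplacian u x := by
  unfold laplacian
  refine Finset.sum_nonneg fun i _ => ?_
  set e : E := EuclideanSpace.single i (1 : ℝ)
  let ℓ : ℝ → E := fun t => x + t • e
  have hℓ : ∀ t, HasDerivAt ℓ e t := fun t => by
    have h := ((hasDerivAt_id t).smul_const e).const_add x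
    rw [one_smul] at h
    exact h
  have hℓ0 : ℓ 0 = x := by simp [ℓ]
  have hcont : Tendsto ℓ (𝓝 0) (𝓝 x) := by
    have := (hℓ 0).continuousAt.tendsto
    rwa [hℓ0] at this
  have hm : IsLocalMin (u ∘ ℓ) 0 := by
    have := hcont.eventually hmin
    filter_upwards [this] with t ht
    simpa [hℓ0] using ht
  have hcu : ContinuousAt (u ∘ ℓ) 0 := by
    refine ContinuousAt.comp ?_ (hℓ 0).continuousAt
    rw [hℓ0]; exact hu.continuousAt
  have h1 : deriv (u ∘ ℓ) =ᶠ[𝓝 0] (fun y => fderiv ℝ u y e) ∘ ℓ := by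
    filter_upwards [hcont.eventually (aux_diff_near hu)] with t ht
    exact (ht.hasFDerivAt.comp_hasDerivAt t (hℓ t)).deriv
  have h2 := second_deriv_nonneg hm hcu
  rw [h1.deriv_eq] at h2
  have d1 := (aux_contDiffAt_partial hu e).differentiableAt (by norm_num)
  have d2 : HasFDerivAt (fun y => fderiv ℝ u y e) (fderiv ℝ (fun y => fderiv ℝ u y e) x) (ℓ 0) := by
    rw [hℓ0]; exact d1.hasFDerivAt
  rw [(d2.comp_hasDerivAt 0 (hℓ 0)).deriv] at h2
  exact h2

/-- Local barrier vanishing at a regular zero of `g`. -/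
lemma exists_barrier {g : E → ℝ} (hg : ContDiff ℝ 2 g) {z : E} (h0 : g z = 0)
    (hd : fderiv ℝ g z ≠ 0) (K : ℝ) :
    ∃ h : E → ℝ, ContDiff ℝ 2 h ∧ h z = 0 ∧
      (∀ᶠ x in 𝓝 z, K * h x < laplacian h x) ∧ (∀ᶠ x in 𝓝 z, g x < 0 → h x < 0) := by
  have hs := grad_sq_pos hd
  set s := ∑ i, (fderiv ℝ g z (EuclideanSpace.single i (1 : ℝ))) ^ 2
  obtain ⟨μ, hμ⟩ : ∃ μ : ℝ, 0 < laplacian g z + μ * (2 * s) := by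
    refine ⟨(1 - laplacian g z) / (2 * s), ?_⟩
    rw [div_mul_cancel₀ _ (by positivity)]
    linarith
  have hc : ContDiff ℝ 2 (fun y => 1 * g y + μ * (g y * g y)) := by fun_prop
  refine ⟨_, hc, by simp [h0], ?_, ?_⟩
  · have hL : laplacian (fun y => 1 * g y + μ * (g y * g y)) z = laplacian g z + μ * (2 * s) := by
      rw [laplacian_comb (u := g) (v := fun y => g y * g y) hg.contDiffAt (hg.mul hg).contDiffAt,
        laplacian_sq hg.contDiffAt h0]
      ring
    refine (((continuous_const.mul hc.continuous).tendsto z).eventually_lt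
      ((laplacian_continuous hc).tendsto z) ?_)
    rw [hL]
    simpa [h0] using hμ
  · have : ∀ᶠ x in 𝓝 z, 0 < 1 + μ * g x := by
      have hcg := hg.continuous
      have : Continuous fun x => 1 + μ * g x := by fun_prop
      exact this.continuousAt.eventually_const_lt (by simp [h0])
    filter_upwards [this] with x hx hgx
    have : 1 * g x + μ * (g x * g x) = g x * (1 + μ * g x) := by ring
    rw [this]
    exact mul_neg_of_neg_of_pos hgx hx

lemma strong_max_local {Ω : Set E} (hΩo : IsOpen Ω) {w : E → ℝ} (hw : ContDiffOn ℝ 2 w Ω)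
    (hnn : ∀ x ∈ Ω, 0 ≤ w x)
    (hloc : ∀ z ∈ Ω, w z = 0 → ∃ K : ℝ, 0 ≤ K ∧ ∀ᶠ x in 𝓝 z, laplacian w x ≤ K * w x)
    {x₀ : E} (hx₀ : x₀ ∈ Ω) (hw0 : w x₀ = 0) : ∀ᶠ p in 𝓝 x₀, w p = 0 := by
  obtain ⟨R, hR, hball⟩ := Metric.isOpen_iff.1 hΩo x₀ hx₀
  obtain ⟨r, hr, hrR⟩ : ∃ r : ℝ, 0 < r ∧ 2 * r < R := ⟨R / 4, by linarith, by linarith⟩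
  have hcb : Metric.closedBall x₀ (2 * r) ⊆ Ω :=
    (Metric.closedBall_subset_ball hrR).trans hball
  filter_upwards [Metric.ball_mem_nhds x₀ hr] with p hp
  by_contra hwp
  have hwc : ContinuousOn w Ω := hw.continuousOn
  set C : Set E := {x ∈ Metric.closedBall x₀ (2 * r) | w x = 0}
  have hCc : IsCompact C := by
    have : IsClosed C := by
      have := (hwc.mono hcb).preimage_isClosed_of_isClosed Metric.isClosed_closedBall
        (isClosed_singleton (x := (0 : ℝ)))
      exact this
    exact (isCompact_closedBall x₀ (2 * r)).of_isClosed_subset this (fun x hx => hx.1)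
  obtain ⟨z, hzC, hzmin⟩ := hCc.exists_isMinOn ⟨x₀, by simp [C, hw0, hr.le]⟩
    (f := fun x => dist x p) (by fun_prop)
  have hzx0 : dist z p ≤ dist x₀ p := hzmin (by simp [C, hw0, hr.le])
  have hpd : dist x₀ p < r := by rw [dist_comm]; exact hp
  have hzp : z ≠ p := by rintro rfl; exact hwp hzC.2
  set d := dist z p with hd
  have hdpos : 0 < d := dist_pos.2 hzp
  have hzball : z ∈ Metric.ball x₀ (2 * r) := by
    have := dist_triangle z p x₀
    rw [dist_comm p x₀] at this
    rw [Metric.mem_ball]; linarith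
  have hzΩ : z ∈ Ω := hcb hzC.1
  have hposball : ∀ x ∈ Metric.ball x₀ (2 * r), dist x p < d → 0 < w x := by
    intro x hx hxd
    have hxc := Metric.ball_subset_closedBall hx
    refine lt_of_le_of_ne (hnn x (hcb hxc)) fun h => ?_
    have : d ≤ dist x p := hzmin (show x ∈ C from ⟨hxc, h.symm⟩)
    linarith
  obtain ⟨K, hK, hKw⟩ := hloc z hzΩ hzC.2
  let g : E → ℝ := fun x => d ^ 2 - ‖x - p‖ ^ 2 - ‖x - z‖ ^ 2
  have hgC : ContDiff ℝ 2 g := by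
    have h1 : ContDiff ℝ 2 fun x : E => ‖x - p‖ ^ 2 := (contDiff_id.sub contDiff_const).norm_sq ℝ
    have h2 : ContDiff ℝ 2 fun x : E => ‖x - z‖ ^ 2 := (contDiff_id.sub contDiff_const).norm_sq ℝ
    exact (contDiff_const.sub h1).sub h2
  have hg0 : g z = 0 := by simp [g, hd, dist_eq_norm]
  have hgd : fderiv ℝ g z ≠ 0 := by
    have hp' : HasFDerivAt (fun x : E => x - p) (ContinuousLinearMap.id ℝ E) z :=
      (hasFDerivAt_id z).sub_const p
    have hz' : HasFDerivAt (fun x : E => x - z) (ContinuousLinearMap.id ℝ E) z :=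
      (hasFDerivAt_id z).sub_const z
    have h := ((hasFDerivAt_const (d ^ 2) z).sub hp'.norm_sq).sub hz'.norm_sq
    have h' : HasFDerivAt g _ z := h
    rw [h'.fderiv]
    intro hh
    have := congrArg (fun L : E →L[ℝ] ℝ => L (z - p)) hh
    simp at this
    rw [← inner_sub_left, inner_self_eq_zero] at this
    exact hzp (sub_eq_zero.1 this)
  obtain ⟨h, hhC, hh0, hhK, hhneg⟩ := exists_barrier hgC hg0 hgd K
  have hall := ((hKw.and hhK).and (hhneg.and (Metric.isOpen_ball.mem_nhds hzball)))
  obtain ⟨ρ, hρ, hρs⟩ := Metric.nhds_basis_closedBall.eventually_iff.1 hall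
  have hρΩ : Metric.closedBall z ρ ⊆ Ω := fun x hx =>
    hcb (Metric.ball_subset_closedBall (hρs hx).2.2)
  have hSsub : Metric.sphere z ρ ⊆ Metric.closedBall z ρ := Metric.sphere_subset_closedBall
  set T : Set E := Metric.sphere z ρ ∩ {x | 0 ≤ g x}
  have hTc : IsCompact T :=
    (isCompact_sphere z ρ).inter_right (isClosed_le continuous_const hgC.continuous)
  have hTpos : ∀ x ∈ T, 0 < w x := by
    rintro x ⟨hxS, hxg⟩
    refine hposball x (hρs (hSsub hxS)).2.2 ?_
    have hxz : ‖x - z‖ = ρ := by simpa [dist_eq_norm] using hxS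
    have hxg' : 0 ≤ d ^ 2 - ‖x - p‖ ^ 2 - ‖x - z‖ ^ 2 := hxg
    rw [hxz] at hxg'
    rw [dist_eq_norm]
    have : 0 < ρ ^ 2 := by positivity
    exact lt_of_pow_lt_pow_left₀ 2 hdpos.le (by linarith)
  obtain ⟨η, hη, hηT⟩ := hTc.exists_forall_le' (f := w) (a := 0)
    (hwc.mono fun x hx => hρΩ (hSsub hx.1)) hTpos
  obtain ⟨H, hH⟩ := (isCompact_sphere z ρ).exists_bound_of_continuousOn hhC.continuous.continuousOn
  set H' := |H| + 1
  have hH' : 0 < H' := by positivity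
  set ε := η / (2 * H')
  have hε : 0 < ε := by positivity
  have hεH : ε * H' = η / 2 := by simp only [ε]; field_simp
  let k : E → ℝ := fun x => 1 * w x + (-ε) * h x
  have hkc : ContinuousOn k (Metric.closedBall z ρ) :=
    (continuousOn_const.mul (hwc.mono hρΩ)).add
      (continuousOn_const.mul hhC.continuous.continuousOn)
  obtain ⟨y, hy, hymin⟩ := (isCompact_closedBall z ρ).exists_isMinOn
    ⟨z, Metric.mem_closedBall_self hρ.le⟩ hkc
  have hky : k y ≤ 0 := by
    have : k y ≤ k z := hymin (Metric.mem_closedBall_self hρ.le)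
    have hz0 : k z = 0 := by simp [k, hh0, hzC.2]
    linarith
  have hyint : y ∈ Metric.ball z ρ := by
    by_contra hyn
    have hyS : y ∈ Metric.sphere z ρ := by
      rw [Metric.mem_sphere]
      exact le_antisymm hy (not_lt.1 hyn)
    have : 0 < k y := by
      simp only [k]
      by_cases hgy : 0 ≤ g y
      · have h1 := hηT y ⟨hyS, hgy⟩
        have h2 := hH y hyS
        have h3 : h y ≤ H' := by
          have := le_abs_self (h y)
          have := le_abs_self H
          rw [Real.norm_eq_abs] at h2
          simp only [H']; linarith
        have h4 : ε * h y ≤ ε * H' := by gcongr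
        linarith
      · have h1 := (hρs hy).2.1 (not_le.1 hgy)
        have h2 := hnn y (hρΩ hy)
        have := mul_neg_of_pos_of_neg hε h1
        linarith
    linarith
  have hyΩ := hρΩ hy
  have hwy : ContDiffAt ℝ 2 w y := hw.contDiffAt (hΩo.mem_nhds hyΩ)
  have hkC : ContDiffAt ℝ 2 k y :=
    (contDiffAt_const.mul hwy).add (contDiffAt_const.mul hhC.contDiffAt)
  have hlm : IsLocalMin k y := hymin.isLocalMin
    (mem_of_superset (Metric.isOpen_ball.mem_nhds hyint) Metric.ball_subset_closedBall)
  have hL := laplacian_nonneg_of_min hkC hlm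
  have hL2 : laplacian k y = 1 * laplacian w y + (-ε) * laplacian h y :=
    laplacian_comb hwy hhC.contDiffAt 1 (-ε)
  have h1 := (hρs hy).1.1
  have h2 := (hρs hy).1.2
  have h3 : ε * (K * h y) < ε * laplacian h y := by gcongr
  have h4 : K * k y ≤ 0 := mul_nonpos_of_nonneg_of_nonpos hK hky
  have h5 : K * k y = K * w y - ε * (K * h y) := by simp only [k]; ring
  linarith

lemma strong_max {Ω : Set E} (hΩo : IsOpen Ω) (hΩc : IsPreconnected Ω) {w : E → ℝ}
    (hw : ContDiffOn ℝ 2 w Ω) (hnn : ∀ x ∈ Ω, 0 ≤ w x)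
    (hloc : ∀ z ∈ Ω, w z = 0 → ∃ K : ℝ, 0 ≤ K ∧ ∀ᶠ x in 𝓝 z, laplacian w x ≤ K * w x)
    {x₀ : E} (hx₀ : x₀ ∈ Ω) (hw0 : w x₀ = 0) : ∀ x ∈ Ω, w x = 0 := by
  by_contra hcon
  push Not at hcon
  obtain ⟨q, hq, hwq⟩ := hcon
  have hU : IsOpen {x ∈ Ω | w x = 0} := by
    rw [isOpen_iff_mem_nhds]
    rintro x ⟨hx, hx0⟩
    exact inter_mem (hΩo.mem_nhds hx) (strong_max_local hΩo hw hnn hloc hx hx0)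
  have hV : IsOpen (Ω ∩ w ⁻¹' {0}ᶜ) :=
    hw.continuousOn.isOpen_inter_preimage hΩo isOpen_compl_singleton
  obtain ⟨x, _, hx1, hx2⟩ := hΩc _ _ hU hV
    (fun x hx => (em (w x = 0)).imp (fun h => ⟨hx, h⟩) (fun h => ⟨hx, h⟩))
    ⟨x₀, hx₀, hx₀, hw0⟩ ⟨q, hq, hq, hwq⟩
  exact hx2.2 hx1.2

/-- A strict positive supersolution near the boundary. -/
lemma exists_strip {Ω : Set E} (hΩb : Bornology.IsBounded Ω) (hΩs : HasSmoothBoundary Ω)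
    (K : ℝ) (hK : 0 ≤ K) :
    ∃ (ψ : E → ℝ) (δ : ℝ), 0 < δ ∧ ContDiff ℝ 2 ψ ∧
      ∀ x ∈ Metric.cthickening δ (frontier Ω), 0 < ψ x ∧ laplacian ψ x + K * ψ x < 0 := by
  obtain ⟨f, hf, hΩ, hfd⟩ := hΩs
  have hf2 : ContDiff ℝ 2 f := hf.of_le (WithTop.coe_le_coe.2 (le_top : (2 : ℕ∞) ≤ ⊤))
  have hfr : IsCompact (frontier Ω) :=
    hΩb.isCompact_closure.of_isClosed_subset isClosed_frontier frontier_subset_closure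
  have hf0 : ∀ x ∈ frontier Ω, f x = 0 := by
    intro x hx
    have := frontier_lt_subset_eq (f := f) (g := fun _ => (0 : ℝ)) hf.continuous continuous_const
    rw [hΩ] at hx
    exact this hx
  have hsc : Continuous fun x => ∑ i, (fderiv ℝ f x (EuclideanSpace.single i (1 : ℝ))) ^ 2 := by
    refine continuous_finsetSum _ fun i _ => ?_
    exact ((hf2.continuous_fderiv (by norm_num)).clm_apply continuous_const).pow 2
  obtain ⟨c, hc, hcf⟩ := hfr.exists_forall_le' (a := 0) hsc.continuousOn
    (fun x hx => grad_sq_pos (hfd x hx))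
  set μ := (K + 1) / c
  have hμ : 0 < μ := by positivity
  have hμc : μ * c = K + 1 := by simp only [μ]; field_simp
  let ψ : E → ℝ := fun x => 1 * (fun _ => (2 : ℝ)) x + (-μ) * (f x * f x)
  have hψ : ContDiff ℝ 2 ψ := by simp only [ψ]; fun_prop
  have hopen : IsOpen ({x | 0 < ψ x} ∩ {x | laplacian ψ x + K * ψ x < 0}) :=
    (isOpen_lt continuous_const hψ.continuous).inter
      (isOpen_lt ((laplacian_continuous hψ).add (continuous_const.mul hψ.continuous))
        continuous_const)
  obtain ⟨δ, hδ, hsub⟩ := hfr.exists_cthickening_subset_open hopen (by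
    intro x hx
    have h0 := hf0 x hx
    have hψx : ψ x = 2 := by simp [ψ, h0]
    have hL : laplacian ψ x = 1 * laplacian (fun _ : E => (2 : ℝ)) x +
        (-μ) * laplacian (fun y => f y * f y) x :=
      laplacian_comb contDiffAt_const (hf2.mul hf2).contDiffAt 1 (-μ)
    rw [laplacian_const, laplacian_sq hf2.contDiffAt h0] at hL
    have h1 := mul_le_mul_of_nonneg_left (hcf x hx) hμ.le
    simp only [mem_inter_iff, mem_ofPred_eq, hψx, hL]
    constructor
    · norm_num
    · linarith)
  exact ⟨ψ, δ, hδ, hψ, fun x hx => hsub hx⟩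

end Helpers

/-- The comparison Proposition 3.3 of the paper with `p = 2`, `f ≡ 0`, for classical sub-
and supersolutions of `Δu + A u − B F(u) = 0` on a bounded, connected, smooth domain
`Ω ⊂ ℝ^m`, with `B ≥ 0` not identically zero on `Ω`: `u₁ ≤ u₂` on `∂Ω` implies
`u₁ ≤ u₂` on `Ω`. -/
theorem comparison_principle (m : ℕ) (hm : 1 ≤ m)
    (Ω : Set (EuclideanSpace ℝ (Fin m)))
    (hΩo : IsOpen Ω) (hΩb : Bornology.IsBounded Ω) (hΩc : IsConnected Ω)
    (hΩs : HasSmoothBoundary Ω)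
    (A B : EuclideanSpace ℝ (Fin m) → ℝ)
    (hA : ContinuousOn A (closure Ω)) (hB : ContinuousOn B (closure Ω))
    (hBnn : ∀ x ∈ closure Ω, 0 ≤ B x) (hBne : ∃ x ∈ Ω, B x ≠ 0)
    (F : ℝ → ℝ) (hF : IsNonlinearity F)
    (u₁ u₂ : EuclideanSpace ℝ (Fin m) → ℝ)
    (hu₁C1 : ContDiffOn ℝ 1 u₁ (closure Ω)) (hu₁C2 : ContDiffOn ℝ 2 u₁ Ω)
    (hu₂C1 : ContDiffOn ℝ 1 u₂ (closure Ω)) (hu₂C2 : ContDiffOn ℝ 2 u₂ Ω)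
    (hsub : ∀ x ∈ Ω, 0 ≤ laplacian u₁ x + A x * u₁ x - B x * F (u₁ x))
    (hsup : ∀ x ∈ Ω, laplacian u₂ x + A x * u₂ x - B x * F (u₂ x) ≤ 0)
    (hu₁nn : ∀ x ∈ Ω, 0 ≤ u₁ x) (hu₂pos : ∀ x ∈ Ω, 0 < u₂ x)
    (hbdry : ∀ x ∈ frontier Ω, u₁ x ≤ u₂ x) :
    ∀ x ∈ Ω, u₁ x ≤ u₂ x := by
  -- pointwise inequality wherever `u₂ ≤ u₁`
  have hu₁at : ∀ x ∈ Ω, ContDiffAt ℝ 2 u₁ x := fun x hx => hu₁C2.contDiffAt (hΩo.mem_nhds hx)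
  have hu₂at : ∀ x ∈ Ω, ContDiffAt ℝ 2 u₂ x := fun x hx => hu₂C2.contDiffAt (hΩo.mem_nhds hx)
  have hlap : ∀ M : ℝ, ∀ x ∈ Ω, laplacian (fun y => M * u₂ y + (-1) * u₁ y) x
      = M * laplacian u₂ x + (-1) * laplacian u₁ x := fun M x hx =>
    laplacian_comb (hu₂at x hx) (hu₁at x hx) M (-1)
  have key0 : ∀ M : ℝ, 1 ≤ M → ∀ x ∈ Ω, laplacian (fun y => M * u₂ y + (-1) * u₁ y) x
      ≤ - A x * (M * u₂ x + (-1) * u₁ x) + B x * (M * F (u₂ x) - F (u₁ x)) := by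
    intro M hM x hx
    rw [hlap M x hx]
    have h1 := hsub x hx
    have h2 := mul_le_mul_of_nonneg_left (hsup x hx) (by linarith : (0 : ℝ) ≤ M)
    linarith
  have key : ∀ M : ℝ, 1 ≤ M → ∀ x ∈ Ω, u₂ x ≤ u₁ x →
      laplacian (fun y => M * u₂ y + (-1) * u₁ y) x
      ≤ (B x * (F (u₂ x) / u₂ x) - A x) * (M * u₂ x + (-1) * u₁ x) := by
    intro M hM x hx h12
    have h0 := key0 M hM x hx
    have hp2 := hu₂pos x hx
    have hp1 : 0 < u₁ x := lt_of_lt_of_le hp2 h12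
    have hq : F (u₂ x) / u₂ x ≤ F (u₁ x) / u₁ x :=
      hF.strictMono.monotoneOn (mem_Ioi.2 hp2) (mem_Ioi.2 hp1) h12
    have h3 : F (u₂ x) / u₂ x * u₁ x ≤ F (u₁ x) := by rwa [le_div_iff₀ hp1] at hq
    have h4 : F (u₂ x) = F (u₂ x) / u₂ x * u₂ x := by field_simp
    have h5 : M * F (u₂ x) - F (u₁ x) ≤ F (u₂ x) / u₂ x * (M * u₂ x + (-1) * u₁ x) := by
      have : M * F (u₂ x) = M * (F (u₂ x) / u₂ x * u₂ x) := by rw [← h4]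
      linarith
    have h6 := mul_le_mul_of_nonneg_left h5 (hBnn x (subset_closure hx))
    linarith
  have hcl : IsCompact (closure Ω) := hΩb.isCompact_closure
  have hu₁c : ContinuousOn u₁ (closure Ω) := hu₁C1.continuousOn
  have hu₂c : ContinuousOn u₂ (closure Ω) := hu₂C1.continuousOn
  have hu₂nn : ∀ x ∈ closure Ω, 0 ≤ u₂ x := fun x hx =>
    le_on_closure (f := fun _ => (0 : ℝ)) (fun y hy => (hu₂pos y hy).le)
      continuousOn_const hu₂c hx
  obtain ⟨K₀, hK₀⟩ := hcl.exists_bound_of_continuousOn hA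
  have hAK : ∀ x ∈ Ω, A x ≤ |K₀| := fun x hx =>
    ((le_abs_self _).trans (hK₀ x (subset_closure hx))).trans (le_abs_self _)
  obtain ⟨ψ, δ, hδ, hψC, hψ⟩ := exists_strip hΩb hΩs |K₀| (abs_nonneg _)
  -- narrow strip comparison
  have strip : ∀ M : ℝ, 1 ≤ M →
      (∀ x ∈ closure Ω \ Metric.thickening δ (frontier Ω), u₁ x ≤ M * u₂ x) →
      ∀ x ∈ Ω, u₁ x ≤ M * u₂ x := by
    intro M hM hin
    let w : EuclideanSpace ℝ (Fin m) → ℝ := fun y => M * u₂ y + (-1) * u₁ y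
    have hwc : ContinuousOn w (closure Ω) :=
      (continuousOn_const.mul hu₂c).add (continuousOn_const.mul hu₁c)
    by_contra hcon
    push Not at hcon
    obtain ⟨q, hqΩ, hq⟩ := hcon
    have hthick : ∀ x ∈ closure Ω, M * u₂ x < u₁ x → x ∈ Metric.thickening δ (frontier Ω) := by
      intro x hx hxw
      by_contra hn
      exact absurd (hin x ⟨hx, hn⟩) (not_le.2 hxw)
    set S := closure Ω ∩ Metric.cthickening δ (frontier Ω)
    have hS : IsCompact S := hcl.inter_right Metric.isClosed_cthickening
    have hqS : q ∈ S := ⟨subset_closure hqΩ,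
      Metric.thickening_subset_cthickening _ _ (hthick q (subset_closure hqΩ) hq)⟩
    have hcont : ContinuousOn (fun x => w x / ψ x) S :=
      (hwc.mono inter_subset_left).div hψC.continuous.continuousOn
        (fun x hx => (hψ x hx.2).1.ne')
    obtain ⟨y, hy, hymin⟩ := hS.exists_isMinOn ⟨q, hqS⟩ hcont
    have hyq : w y / ψ y ≤ w q / ψ q := hymin hqS
    have hψy := (hψ y hy.2).1
    have hneg : w y / ψ y < 0 := by
      refine lt_of_le_of_lt hyq (div_neg_of_neg_of_pos ?_ (hψ q hqS.2).1)
      simp only [w]; linarith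
    obtain ⟨τ, hτ⟩ : ∃ τ, τ = -(w y / ψ y) := ⟨_, rfl⟩
    have hτpos : 0 < τ := by linarith
    have hwy : w y = -(τ * ψ y) := by rw [hτ]; field_simp
    have hwyneg : w y < 0 := by
      rw [hwy]; have := mul_pos hτpos hψy; linarith
    have hwy' : M * u₂ y < u₁ y := by simp only [w] at hwyneg; linarith
    have hyΩ : y ∈ Ω := by
      by_contra hn
      have hyf : y ∈ frontier Ω := ⟨hy.1, by rwa [hΩo.interior_eq]⟩
      have h1 := hbdry y hyf
      have h2 := mul_le_mul_of_nonneg_right hM (hu₂nn y hy.1)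
      linarith
    have hyt := hthick y hy.1 hwy'
    have hwC : ContDiffAt ℝ 2 w y :=
      (contDiffAt_const.mul (hu₂at y hyΩ)).add (contDiffAt_const.mul (hu₁at y hyΩ))
    let k : EuclideanSpace ℝ (Fin m) → ℝ := fun x => 1 * w x + τ * ψ x
    have hkC : ContDiffAt ℝ 2 k y :=
      (contDiffAt_const.mul hwC).add (contDiffAt_const.mul hψC.contDiffAt)
    have hkmin : IsLocalMin k y := by
      have hnhds : Ω ∩ Metric.thickening δ (frontier Ω) ∈ 𝓝 y :=
        (hΩo.inter Metric.isOpen_thickening).mem_nhds ⟨hyΩ, hyt⟩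
      filter_upwards [hnhds] with x hx
      have hxS : x ∈ S := ⟨subset_closure hx.1, Metric.thickening_subset_cthickening _ _ hx.2⟩
      have h1 : w y / ψ y ≤ w x / ψ x := hymin hxS
      have hψx := (hψ x hxS.2).1
      rw [le_div_iff₀ hψx] at h1
      have h2 : w y / ψ y = -τ := by linarith
      rw [h2] at h1
      simp only [k, hwy]
      linarith
    have hL := laplacian_nonneg_of_min hkC hkmin
    have hL2 : laplacian k y = 1 * laplacian w y + τ * laplacian ψ y :=
      laplacian_comb hwC hψC.contDiffAt 1 τ
    have hu12 : u₂ y ≤ u₁ y := by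
      have h2 := mul_le_mul_of_nonneg_right hM (hu₂nn y hy.1)
      linarith
    have hk : laplacian w y ≤ (B y * (F (u₂ y) / u₂ y) - A y) * w y := key M hM y hyΩ hu12
    have hBF : 0 ≤ B y * (F (u₂ y) / u₂ y) :=
      mul_nonneg (hBnn y hy.1) (div_pos (hF.pos _ (hu₂pos y hyΩ)) (hu₂pos y hyΩ)).le
    have h3 : (B y * (F (u₂ y) / u₂ y) - A y) * w y ≤ (-|K₀|) * w y :=
      mul_le_mul_of_nonpos_right (by have := hAK y hyΩ; linarith) hwyneg.le
    have h4 := mul_neg_of_pos_of_neg hτpos (hψ y hy.2).2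
    rw [hwy] at h3 hk
    linarith
  set C := closure Ω \ Metric.thickening δ (frontier Ω)
  have hCΩ : C ⊆ Ω := by
    rintro x ⟨hx, hxn⟩
    by_contra hn
    exact hxn (Metric.self_subset_thickening hδ _ ⟨hx, by rwa [hΩo.interior_eq]⟩)
  have hCc : IsCompact C := hcl.diff Metric.isOpen_thickening
  by_contra hcon
  have hCbad : ∃ x ∈ C, u₂ x < u₁ x := by
    by_contra hn
    push Not at hn
    apply hcon
    intro x hx
    have := strip 1 le_rfl (fun y hy => by rw [one_mul]; exact hn y hy) x hx
    linarith
  obtain ⟨q, hqC, hq⟩ := hCbad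
  have hdc : ContinuousOn (fun x => u₁ x / u₂ x) C :=
    (hu₁c.mono sdiff_subset).div (hu₂c.mono sdiff_subset) (fun x hx => (hu₂pos x (hCΩ hx)).ne')
  obtain ⟨x₀, hx₀C, hx₀max⟩ := hCc.exists_isMaxOn ⟨q, hqC⟩ hdc
  obtain ⟨M, hMdef⟩ : ∃ M, M = u₁ x₀ / u₂ x₀ := ⟨_, rfl⟩
  have hMmax : ∀ x ∈ C, u₁ x / u₂ x ≤ M := fun x hx => by rw [hMdef]; exact hx₀max hx
  have hM1 : 1 < M := lt_of_lt_of_le ((one_lt_div (hu₂pos q (hCΩ hqC))).2 hq) (hMmax q hqC)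
  have hle : ∀ x ∈ Ω, u₁ x ≤ M * u₂ x :=
    strip M hM1.le fun x hx => (div_le_iff₀ (hu₂pos x (hCΩ hx))).1 (hMmax x hx)
  have hwC2 : ContDiffOn ℝ 2 (fun y => M * u₂ y + (-1) * u₁ y) Ω :=
    (contDiffOn_const.mul hu₂C2).add (contDiffOn_const.mul hu₁C2)
  have hwnn : ∀ x ∈ Ω, 0 ≤ (fun y => M * u₂ y + (-1) * u₁ y) x := fun x hx => by
    have := hle x hx
    simp only; linarith
  have hw0 : (fun y => M * u₂ y + (-1) * u₁ y) x₀ = 0 := by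
    have := (hu₂pos x₀ (hCΩ hx₀C)).ne'
    simp only [hMdef]; field_simp; ring
  have hzero := strong_max hΩo hΩc.isPreconnected hwC2 hwnn (by
    intro z hz hwz
    have hz2 := hu₂pos z hz
    have hz12 : u₂ z < u₁ z := by
      have := mul_lt_mul_of_pos_right hM1 hz2
      linarith
    have hnb : closure Ω ∈ 𝓝 z := mem_of_superset (hΩo.mem_nhds hz) subset_closure
    have c1 := hu₁c.continuousAt hnb
    have c2 := hu₂c.continuousAt hnb
    have cA := hA.continuousAt hnb
    have cB := hB.continuousAt hnb
    have cF : ContinuousAt F (u₂ z) := hF.cont.continuousAt (Ici_mem_nhds hz2)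
    have cFu : ContinuousAt (fun x => F (u₂ x)) z := ContinuousAt.comp (f := u₂) cF c2
    have cq : ContinuousAt (fun x => B x * (F (u₂ x) / u₂ x) - A x) z :=
      (cB.mul (cFu.div c2 hz2.ne')).sub cA
    refine ⟨|B z * (F (u₂ z) / u₂ z) - A z| + 1, by positivity, ?_⟩
    have e1 := cq.eventually_lt_const
      (lt_of_le_of_lt (le_abs_self _) (lt_add_one |B z * (F (u₂ z) / u₂ z) - A z|))
    filter_upwards [e1, c2.eventually_lt c1 hz12, hΩo.mem_nhds hz] with x hx1 hx2 hx3
    exact (key M hM1.le x hx3 hx2.le).trans (mul_le_mul_of_nonneg_right hx1.le (hwnn x hx3)))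
    (hCΩ hx₀C) hw0
  obtain ⟨b, hbΩ, hb⟩ := hBne
  have hBpos : 0 < B b := lt_of_le_of_ne (hBnn b (subset_closure hbΩ)) hb.symm
  have hwb : M * u₂ b + (-1) * u₁ b = 0 := hzero b hbΩ
  have hmin : IsLocalMin (fun y => M * u₂ y + (-1) * u₁ y) b := by
    filter_upwards [hΩo.mem_nhds hbΩ] with x hx
    rw [hwb]
    exact hwnn x hx
  have hL := laplacian_nonneg_of_min (hwC2.contDiffAt (hΩo.mem_nhds hbΩ)) hmin
  have hL2 := key0 M hM1.le b hbΩ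
  rw [hwb] at hL2
  have hb2 := hu₂pos b hbΩ
  have hb12 : u₂ b < u₁ b := by
    have := mul_lt_mul_of_pos_right hM1 hb2
    linarith
  have hb1 : 0 < u₁ b := hb2.trans hb12
  have hlt : F (u₂ b) / u₂ b < F (u₁ b) / u₁ b := hF.strictMono hb2 hb1 hb12
  have h3 : F (u₂ b) / u₂ b * u₁ b < F (u₁ b) := by rwa [lt_div_iff₀ hb1] at hlt
  have h4 : F (u₂ b) / u₂ b * u₁ b = M * F (u₂ b) := by
    have : u₁ b = M * u₂ b := by linarith
    rw [this]; field_simp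
  have h5 : B b * (M * F (u₂ b) - F (u₁ b)) < 0 :=
    mul_neg_of_pos_of_neg hBpos (by linarith)
  linarith
end
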